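/- For weak compositions a and b of length n, the product of fundamental slide polynomials expands as 𝔉_a · 𝔉_b = Σ_c [c | a ⧢ b] 𝔉_c, where [c | a ⧢ b] is the multiplicity of the weak composition c in the slide product a ⧢ b. -/

import Mathlib

open scoped Classical

namespace SlidePaper

/-- Sum of the first `i` entries of a weak composition of length `n`. -/
def psum {n : ℕ} (a : Fin n → ℕ) (i : ℕ) : ℕ :=
  ∑ j ∈ Finset.univ.filter (fun j : Fin n => (j : ℕ) < i), a j

/-- `b` dominates `a`: all partial sums of `b` are at least those of `a`. -/
def Dominates {n : ℕ} (b a : Fin n → ℕ) : Prop :=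
  ∀ i : Fin (n + 1), psum a i ≤ psum b i

/-- The flattening of a weak composition: the list of its nonzero entries in order. -/
def flat {n : ℕ} (a : Fin n → ℕ) : List ℕ :=
  (List.ofFn a).filter (fun x => x ≠ 0)

/-- `β` refines `α`: `β` splits into consecutive blocks with sums `α₁, α₂, …`. -/
def Refines (β α : List ℕ) : Prop :=
  ∃ L : List (List ℕ), L.flatten = β ∧ L.map List.sum = α

/-- All weak compositions of length `n` with entries at most `k`. -/
def wcFinset (n k : ℕ) : Finset (Fin n → ℕ) :=
  Fintype.piFinset fun _ => Finset.range (k + 1)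

/-- The monomial slide polynomial `𝔐_a`. -/
noncomputable def slideM {n : ℕ} (a : Fin n → ℕ) : MvPolynomial (Fin n) ℤ :=
  ∑ b ∈ (wcFinset n (∑ i, a i)).filter (fun b => Dominates b a ∧ flat b = flat a),
    MvPolynomial.monomial (Finsupp.equivFunOnFinite.symm b) 1

/-- The fundamental slide polynomial `𝔉_a`. -/
noncomputable def slideF {n : ℕ} (a : Fin n → ℕ) : MvPolynomial (Fin n) ℤ :=
  ∑ b ∈ (wcFinset n (∑ i, a i)).filter (fun b => Dominates b a ∧ Refines (flat b) (flat a)),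
    MvPolynomial.monomial (Finsupp.equivFunOnFinite.symm b) 1

/-- A weak composition is quasi-flat if its nonzero entries occupy consecutive positions. -/
def QuasiFlat {n : ℕ} (a : Fin n → ℕ) : Prop :=
  ∀ i j l : Fin n, i ≤ j → j ≤ l → a i ≠ 0 → a l ≠ 0 → a j ≠ 0

/-- `b` strongly dominates `a`. -/
def StronglyDominates {n : ℕ} (b a : Fin n → ℕ) : Prop :=
  Dominates b a ∧ ∀ c : Fin n → ℕ, Dominates c a → flat c = flat b → Dominates c b

/-- The exponent vector placing the parts of `α` at the positions `i`. -/
noncomputable def placeExp {n : ℕ} (α : List ℕ) (i : Fin α.length → Fin n) : Fin n →₀ ℕ :=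
  ∑ t : Fin α.length, Finsupp.single (i t) (α.get t)

/-- `f` is quasisymmetric in the variables `x_1, …, x_k` (0-indexed: `x_0, …, x_{k-1}`). -/
def IsQuasisymmetricIn {n : ℕ} (k : ℕ) (f : MvPolynomial (Fin n) ℤ) : Prop :=
  ∀ α : List ℕ, (∀ x ∈ α, 0 < x) →
    ∀ i j : Fin α.length → Fin n, StrictMono i → StrictMono j →
      (∀ t, (i t : ℕ) < k) → (∀ t, (j t : ℕ) < k) →
      MvPolynomial.coeff (placeExp α i) f = MvPolynomial.coeff (placeExp α j) f

/-- The monomial quasisymmetric polynomial `M_α(x_1, …, x_k)` inside `ℤ[x_1, …, x_n]`. -/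
noncomputable def Mqs (n k : ℕ) (α : List ℕ) : MvPolynomial (Fin n) ℤ :=
  ∑ i ∈ (Finset.univ : Finset (Fin α.length → Fin n)).filter
      (fun i : Fin α.length → Fin n => StrictMono i ∧ ∀ t, (i t : ℕ) < k),
    ∏ t : Fin α.length, (MvPolynomial.X (i t) : MvPolynomial (Fin n) ℤ) ^ α.get t

/-- The fundamental quasisymmetric polynomial `F_α(x_1, …, x_k)` inside `ℤ[x_1, …, x_n]`. -/
noncomputable def Fqs (n k : ℕ) (α : List ℕ) : MvPolynomial (Fin n) ℤ :=
  ∑ c ∈ (Finset.univ : Finset (Composition α.sum)).filter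
      (fun c => Refines c.blocks α ∧ c.blocks.length ≤ k),
    Mqs n k c.blocks

/-- Place the weak composition `a` (of length `N`) at offset `k` inside length `M`. -/
def shiftComp {N : ℕ} (k M : ℕ) (a : Fin N → ℕ) : Fin M → ℕ :=
  fun i => if h : k ≤ (i : ℕ) ∧ (i : ℕ) - k < N then a ⟨(i : ℕ) - k, h.2⟩ else 0

/-- Spread the values `g` to positions `ι` inside a weak composition of length `n`. -/
def spread {l n : ℕ} (ι : Fin l → Fin n) (g : Fin l → ℕ) : Fin n → ℕ :=
  fun i => ∑ k, if ι k = i then g k else 0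

/-- The monomial quasisymmetric function `M_α` in infinitely many variables. -/
noncomputable def MqsFun (α : List ℕ) : MvPowerSeries ℕ ℤ :=
  fun d => if ∃ i : Fin α.length → ℕ, StrictMono i ∧
      d = ∑ t : Fin α.length, Finsupp.single (i t) (α.get t) then 1 else 0

/-- The fundamental quasisymmetric function `F_α` in infinitely many variables. -/
noncomputable def FqsFun (α : List ℕ) : MvPowerSeries ℕ ℤ :=
  ∑ c ∈ (Finset.univ : Finset (Composition α.sum)).filter (fun c => Refines c.blocks α),
    MqsFun c.blocks

/-- The cells of the Young diagram of `lam` (French notation): row `r` (from the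
bottom, 0-indexed) has `lam.get r` cells. -/
abbrev Cells (lam : List ℕ) := Σ r : Fin lam.length, Fin (lam.get r)

/-- A filling of `lam` with entries in `{1, …, n}` (encoded as `Fin n`) is a semistandard
Young tableau: rows weakly increase left to right, columns strictly increase bottom to top. -/
def IsSSYT {n : ℕ} {lam : List ℕ} (T : Cells lam → Fin n) : Prop :=
  (∀ (r : Fin lam.length) (c c' : Fin (lam.get r)), c ≤ c' → T ⟨r, c⟩ ≤ T ⟨r, c'⟩) ∧
  (∀ (r r' : Fin lam.length) (c' : Fin (lam.get r')) (h : (c' : ℕ) < lam.get r),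
      (r : ℕ) < (r' : ℕ) → T ⟨r, ⟨c', h⟩⟩ < T ⟨r', c'⟩)

/-- The weight of a filling: the `v`-th entry counts the occurrences of the value `v`. -/
def wtT {n : ℕ} {lam : List ℕ} (T : Cells lam → Fin n) : Fin n → ℕ :=
  fun v => (Finset.univ.filter (fun x : Cells lam => T x = v)).card

/-- A filling is quasi-Yamanouchi if for every value `v > 1`, the leftmost occurrence of `v`
lies weakly left of some occurrence of `v - 1`. -/
def IsQY {n : ℕ} {lam : List ℕ} (T : Cells lam → Fin n) : Prop :=
  ∀ (v : Fin n) (x : Cells lam), T x = v → 0 < (v : ℕ) →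
    (∀ y : Cells lam, T y = v → (x.2 : ℕ) ≤ (y.2 : ℕ)) →
    ∃ z : Cells lam, (T z : ℕ) + 1 = (v : ℕ) ∧ (x.2 : ℕ) ≤ (z.2 : ℕ)

/-- The Schur polynomial `s_lam(x_1, …, x_n)` as the generating function of
semistandard Young tableaux. -/
noncomputable def schurPoly (n : ℕ) (lam : List ℕ) : MvPolynomial (Fin n) ℤ :=
  ∑ T ∈ (Finset.univ : Finset (Cells lam → Fin n)).filter (fun T => IsSSYT T),
    MvPolynomial.monomial (Finsupp.equivFunOnFinite.symm (wtT T)) 1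

/-- One destandardization step on fillings: for some value `v` occurring in `T` whose
leftmost occurrence is strictly right of every occurrence of `v - 1`, every `v` is
decremented to `v - 1`. -/
def TabStep {n : ℕ} {lam : List ℕ} (T T' : Cells lam → Fin n) : Prop :=
  ∃ v : Fin n, 0 < (v : ℕ) ∧ (∃ x, T x = v) ∧
    (∀ x y : Cells lam, T x = v → (T y : ℕ) + 1 = (v : ℕ) → (y.2 : ℕ) < (x.2 : ℕ)) ∧
    ∀ x : Cells lam, (T' x : ℕ) = if T x = v then (v : ℕ) - 1 else (T x : ℕ)

/-- The reading word of a set of crosses: rows are read from top to bottom, each row from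
left to right, the cross in (0-indexed) row `i` and column `j` recording the letter `i + j`
(representing the simple transposition swapping `i + j` and `i + j + 1` of `{0, 1, 2, …}`). -/
def readWord (P : Finset (ℕ × ℕ)) : List ℕ :=
  ((List.range (P.sup Prod.fst + 1)).reverse).flatMap
    (fun i => ((List.range (P.sup Prod.snd + 1)).filter (fun j => decide ((i, j) ∈ P))).map
      (fun j => i + j))

/-- The permutation `s_{i_ℓ} ⋯ s_{i_1}` associated to the word `(i_1, …, i_ℓ)`,
where `s_k` swaps `k` and `k + 1`. -/
def wordPerm (l : List ℕ) : Equiv.Perm ℕ :=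
  ((l.map (fun k => Equiv.swap k (k + 1))).reverse).prod

/-- A word is reduced if no shorter word has the same product. -/
def IsReducedWord (l : List ℕ) : Prop :=
  ∀ l' : List ℕ, wordPerm l' = wordPerm l → l.length ≤ l'.length

/-- `P` is a reduced pipe dream of shape `w`: the pipes trace out `w` and no two pipes
cross more than once, equivalently the reading word of `P` is a reduced word for `w`. -/
def IsPD (w : Equiv.Perm ℕ) (P : Finset (ℕ × ℕ)) : Prop :=
  wordPerm (readWord P) = w ∧ IsReducedWord (readWord P)

/-- `P` is a quasi-Yamanouchi pipe dream of shape `w`: for every row, the westernmost cross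
is in the first column or lies weakly west of some cross in the row above. -/
def IsQPD (w : Equiv.Perm ℕ) (P : Finset (ℕ × ℕ)) : Prop :=
  IsPD w P ∧ ∀ i j : ℕ, (i, j) ∈ P → (∀ j', (i, j') ∈ P → j ≤ j') →
    (j = 0 ∨ ∃ j', (i + 1, j') ∈ P ∧ j ≤ j')

/-- One destandardization step on pipe dreams: a row with no cross in the first column,
all of whose crosses lie strictly east of every cross in the row above, has all its
crosses moved one step northwest. -/
def PDStep (P P' : Finset (ℕ × ℕ)) : Prop :=
  ∃ r : ℕ, (∃ j, (r, j) ∈ P) ∧ (r, 0) ∉ P ∧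
    (∀ j j', (r, j) ∈ P → (r + 1, j') ∈ P → j' < j) ∧
    P' = P.filter (fun p => p.1 ≠ r) ∪
      (P.filter (fun p => p.1 = r)).image (fun p => (r + 1, p.2 - 1))

/-- The number of crosses of `P` in (0-indexed) row `i`. -/
def rowWt (P : Finset (ℕ × ℕ)) (i : ℕ) : ℕ := (P.filter (fun p => p.1 = i)).card

/-- The weight of a pipe dream, as a weak composition of length `n`. -/
def wtFin (n : ℕ) (P : Finset (ℕ × ℕ)) : Fin n → ℕ := fun i => rowWt P (i : ℕ)

/-- The flattened weight of a pipe dream: the list of nonzero row counts, bottom row first. -/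
def flatWt (P : Finset (ℕ × ℕ)) : List ℕ :=
  ((List.range (P.sup Prod.fst + 1)).map (rowWt P)).filter (fun x => x ≠ 0)

/-- The Schubert polynomial of `w` in the variables `x_1, …, x_n`, as the generating
function of reduced pipe dreams of shape `w`. -/
noncomputable def SchubertPoly (n : ℕ) (w : Equiv.Perm ℕ) : MvPolynomial (Fin n) ℤ :=
  ∑ᶠ P ∈ {P : Finset (ℕ × ℕ) | IsPD w P},
    MvPolynomial.monomial (Finsupp.equivFunOnFinite.symm (wtFin n P)) 1

/-- The Lehmer code of `w` (0-indexed): `lehmer w i` counts `j > i` with `w j < w i`. -/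
noncomputable def lehmer (w : Equiv.Perm ℕ) (i : ℕ) : ℕ :=
  Set.ncard {j : ℕ | i < j ∧ w j < w i}

/-- The Lehmer code of `w` as a weak composition of length `n`. -/
noncomputable def lehmerFin (n : ℕ) (w : Equiv.Perm ℕ) : Fin n → ℕ :=
  fun i => lehmer w (i : ℕ)

/-- The number of inversions of `w`. -/
noncomputable def invCount (w : Equiv.Perm ℕ) : ℕ :=
  Set.ncard {p : ℕ × ℕ | p.1 < p.2 ∧ w p.2 < w p.1}

/-- The largest entry of the Lehmer code of `w`. -/
noncomputable def maxLehmer (w : Equiv.Perm ℕ) : ℕ :=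
  sSup (Set.range (lehmer w))

/-- The (0-indexed) position of the first descent of `w`. -/
noncomputable def firstDescent (w : Equiv.Perm ℕ) : ℕ :=
  sInf {i : ℕ | w (i + 1) < w i}

/-- `δ(w) = 1` if every position attaining `max(L(w))` is at or before the first descent,
and `δ(w) = 0` otherwise. -/
noncomputable def delta (w : Equiv.Perm ℕ) : ℤ :=
  if ∀ i : ℕ, lehmer w i = maxLehmer w → i ≤ firstDescent w then 1 else 0

/-- `η(w) = inv(w) − max(L(w)) + δ(w) − min{i : w_i > w_{i+1}}`. -/
noncomputable def eta (w : Equiv.Perm ℕ) : ℤ :=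
  (invCount w : ℤ) - (maxLehmer w : ℤ) + delta w - ((firstDescent w : ℤ) + 1)

/-- The decomposition of a list into maximal strictly increasing runs. -/
def runsStrict : List ℕ → List (List ℕ)
  | [] => []
  | x :: rest =>
    match runsStrict rest, rest with
    | r :: rs, y :: _ => if x < y then (x :: r) :: rs else [x] :: r :: rs
    | _, _ => [[x]]

/-- The descent composition of a word: lengths of its maximal increasing runs, a new run
beginning whenever a letter is followed by a weakly smaller letter. -/
def desStrict (l : List ℕ) : List ℕ := (runsStrict l).map List.length

/-- The decomposition of a list into maximal weakly increasing runs. -/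
def runsWeak : List ℕ → List (List ℕ)
  | [] => []
  | x :: rest =>
    match runsWeak rest, rest with
    | r :: rs, y :: _ => if x ≤ y then (x :: r) :: rs else [x] :: r :: rs
    | _, _ => [[x]]

/-- The descent composition of a word: the lengths of its maximal weakly increasing runs. -/
def desComp (l : List ℕ) : List ℕ := (runsWeak l).map List.length

/-- The permutation `1^m × w`, fixing `0, …, m-1` and acting by `w` shifted by `m` above. -/
def shiftPerm (m : ℕ) (w : Equiv.Perm ℕ) : Equiv.Perm ℕ where
  toFun i := if i < m then i else w (i - m) + m
  invFun i := if i < m then i else w.symm (i - m) + m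
  left_inv i := by
    dsimp only
    by_cases h : i < m
    · simp [h]
    · have h2 : ¬ (w (i - m) + m < m) := by omega
      rw [if_neg h, if_neg h2, Nat.add_sub_cancel, Equiv.symm_apply_apply]
      omega
  right_inv i := by
    dsimp only
    by_cases h : i < m
    · simp [h]
    · have h2 : ¬ (w.symm (i - m) + m < m) := by omega
      rw [if_neg h, if_neg h2, Nat.add_sub_cancel, Equiv.apply_symm_apply]
      omega

/-- The quasi-shuffle product of two (strong) compositions, as a multiset of compositions. -/
def qShuffle : List ℕ → List ℕ → Multiset (List ℕ)
  | [], β => {β}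
  | α, [] => {α}
  | a :: α, b :: β =>
      ((qShuffle α (b :: β)).map (a :: ·)) + ((qShuffle (a :: α) β).map (b :: ·)) +
        ((qShuffle α β).map ((a + b) :: ·))
termination_by α β => α.length + β.length
decreasing_by all_goals (simp only [List.length_cons]; omega)

def shuffles : List ℕ → List ℕ → Multiset (List ℕ)
  | [], B => {B}
  | A, [] => {A}
  | x :: A, y :: B =>
      ((shuffles A (y :: B)).map (x :: ·)) + ((shuffles (x :: A) B).map (y :: ·))
termination_by A B => A.length + B.length
decreasing_by all_goals (simp only [List.length_cons]; omega)

/-- The word `(2n-1)^{a_1} (2n-3)^{a_2} ⋯ 1^{a_n}` associated to a weak composition `a`. -/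
def wordA {n : ℕ} (a : Fin n → ℕ) : List ℕ :=
  (List.ofFn (fun i : Fin n => List.replicate (a i) (2 * n - 2 * (i : ℕ) - 1))).flatten

/-- The word `(2n)^{b_1} (2n-2)^{b_2} ⋯ 2^{b_n}` associated to a weak composition `b`. -/
def wordB {n : ℕ} (b : Fin n → ℕ) : List ℕ :=
  (List.ofFn (fun i : Fin n => List.replicate (b i) (2 * n - 2 * (i : ℕ)))).flatten

/-- A list (padded with trailing zeros) dominates a weak composition of length `n`. -/
def DominatesList {n : ℕ} (l : List ℕ) (a : Fin n → ℕ) : Prop :=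
  ∀ i : Fin (n + 1), psum a (i : ℕ) ≤ ((l.take (i : ℕ)).sum)

/-- The number of letters of the `A`-word (the odd letters) in the `k`-th weakly
increasing run of `C`. -/
def runCountA (C : List ℕ) (k : Fin (runsWeak C).length) : ℕ :=
  (((runsWeak C).get k).filter (fun z => z % 2 = 1)).length

/-- The number of letters of the `B`-word (the even letters) in the `k`-th weakly
increasing run of `C`. -/
def runCountB (C : List ℕ) (k : Fin (runsWeak C).length) : ℕ :=
  (((runsWeak C).get k).filter (fun z => z % 2 = 0)).length

/-- The length of the `k`-th weakly increasing run of `C`. -/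
def runLen (C : List ℕ) (k : Fin (runsWeak C).length) : ℕ :=
  ((runsWeak C).get k).length

/-- `c = bump_{(a,b)}(C)`: the unique weak composition of length `n` obtained by inserting
zero parts into `Des(C)` so that the correspondingly placed `Des_A` and `Des_B` dominate
`a` and `b`, minimal in dominance order among all such insertions. -/
def IsBumpS {n : ℕ} (a b : Fin n → ℕ) (C : List ℕ) (c : Fin n → ℕ) : Prop :=
  ∃ ι : Fin (runsWeak C).length → Fin n, StrictMono ι ∧
    c = spread ι (runLen C) ∧
    Dominates (spread ι (runCountA C)) a ∧ Dominates (spread ι (runCountB C)) b ∧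
    ∀ ι' : Fin (runsWeak C).length → Fin n, StrictMono ι' →
      Dominates (spread ι' (runCountA C)) a → Dominates (spread ι' (runCountB C)) b →
      Dominates (spread ι' (runLen C)) c

/-- The multiplicity `[c ∣ a ⧢ b]` of `c` in the slide product of `a` and `b`: the number of
shuffles `C` of the words of `a` and `b` lying in the shuffle set `SS(a,b)` with
`bump_{(a,b)}(C) = c`. -/
noncomputable def slideMult {n : ℕ} (a b c : Fin n → ℕ) : ℕ :=
  Multiset.card ((shuffles (wordA a) (wordB b)).filter
    (fun C => DominatesList ((runsWeak C).map
        (fun r => (r.filter (fun z => z % 2 = 1)).length)) a ∧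
      DominatesList ((runsWeak C).map (fun r => (r.filter (fun z => z % 2 = 0)).length)) b ∧
      IsBumpS a b C c))

/-- Membership in the quasi-shuffle set `QSS(a,b)`: a pair `(γ_a, γ_b)` of weak compositions
of a common length at most `n` with `γ_a ≥ a`, `flat(γ_a) = flat(a)`, `γ_b ≥ b`,
`flat(γ_b) = flat(b)` (after padding with trailing zeros), and all entries of
`γ_a + γ_b` positive. -/
def InQSS {n : ℕ} (a b : Fin n → ℕ) (x : (l : ℕ) × (Fin l → ℕ) × (Fin l → ℕ)) : Prop :=
  x.1 ≤ n ∧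
  Dominates (shiftComp 0 n x.2.1) a ∧ flat x.2.1 = flat a ∧
  Dominates (shiftComp 0 n x.2.2) b ∧ flat x.2.2 = flat b ∧
  ∀ k : Fin x.1, 0 < x.2.1 k + x.2.2 k

/-- `c = bump_{(a,b)}(γ_a, γ_b)`: the unique weak composition `c` of length `n` with
`flat(c) = γ_a + γ_b` whose decomposition `c = c_a + c_b` satisfies `c_a ≥ a` and
`c_b ≥ b`, minimal in dominance order among all such compositions. -/
def IsBumpQ {n : ℕ} (a b : Fin n → ℕ) (x : (l : ℕ) × (Fin l → ℕ) × (Fin l → ℕ))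
    (c : Fin n → ℕ) : Prop :=
  ∃ ι : Fin x.1 → Fin n, StrictMono ι ∧
    c = spread ι (fun k => x.2.1 k + x.2.2 k) ∧
    Dominates (spread ι x.2.1) a ∧ Dominates (spread ι x.2.2) b ∧
    ∀ ι' : Fin x.1 → Fin n, StrictMono ι' →
      Dominates (spread ι' x.2.1) a → Dominates (spread ι' x.2.2) b →
      Dominates (spread ι' (fun k => x.2.1 k + x.2.2 k)) c

/-- The multiplicity `[c ∣ a ⧻ b]` of `c` in the quasi-slide product of `a` and `b`: the
number of pairs in the quasi-shuffle set `QSS(a,b)` whose bump is `c`. -/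
noncomputable def qsMult {n : ℕ} (a b c : Fin n → ℕ) : ℕ :=
  Nat.card {x : (l : ℕ) × (Fin l → ℕ) × (Fin l → ℕ) // InQSS a b x ∧ IsBumpQ a b x c}

/-- The Stanley symmetric function `S_w`. -/
noncomputable def StanleySym (w : Equiv.Perm ℕ) : MvPowerSeries ℕ ℤ :=
  ∑ᶠ l ∈ {l : List ℕ | wordPerm l = w ∧ IsReducedWord l}, FqsFun (desStrict l)

/-- Lexicographic comparison of biletters `(position, letter)`. -/
def BiletterLE (s t : ℕ × ℕ) : Prop := s.1 < t.1 ∨ (s.1 = t.1 ∧ s.2 ≤ t.2)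

theorem BiletterLE.trans {s t u : ℕ × ℕ} (h : BiletterLE s t) (h' : BiletterLE t u) :
    BiletterLE s u := by
  unfold BiletterLE at *
  omega

/-- The placements of the letters of `C` into positions `0, …, n-1` such that the biletters
are lexicographically increasing, all above `s`, and each letter respects its bound. -/
noncomputable def placements (n : ℕ) (s : ℕ × ℕ) (C : List ℕ) :
    Finset (Fin C.length → Fin n) :=
  Finset.univ.filter fun p =>
    (∀ j, BiletterLE s (p j, C.get j)) ∧ (∀ j, (p j : ℕ) ≤ (2 * n - C.get j) / 2) ∧
      ∀ j k, j ≤ k → BiletterLE (p j, C.get j) (p k, C.get k)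

/-- The generating polynomial of the placements of `C`. -/
noncomputable def placementSum (n : ℕ) (s : ℕ × ℕ) (C : List ℕ) : MvPolynomial (Fin n) ℤ :=
  ∑ p ∈ placements n s C, ∏ j, MvPolynomial.X (p j)

theorem placementSum_nil (n : ℕ) (s : ℕ × ℕ) : placementSum n s [] = 1 := by
  have h : placements n s [] = Finset.univ :=
    Finset.filter_true_of_mem fun p _ =>
      ⟨fun j => j.elim0, fun j => j.elim0, fun j => j.elim0⟩
  rw [placementSum, h]
  simp

theorem cons_mem_placements {n : ℕ} {s : ℕ × ℕ} {z : ℕ} {C : List ℕ} {i : Fin n}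
    {q : Fin C.length → Fin n} :
    (Fin.cons i q : Fin (C.length + 1) → Fin n) ∈ placements n s (z :: C) ↔
      (BiletterLE s (i, z) ∧ (i : ℕ) ≤ (2 * n - z) / 2) ∧ q ∈ placements n (i, z) C := by
  simp only [placements, Finset.mem_filter, Finset.mem_univ, true_and]
  constructor
  · rintro ⟨h1, h2, h3⟩
    exact ⟨⟨h1 0, h2 0⟩, fun j => h3 0 j.succ (Fin.zero_le _), fun j => h2 j.succ,
      fun j j' h => h3 j.succ j'.succ (Fin.succ_le_succ_iff.2 h)⟩
  · rintro ⟨⟨h1, h2⟩, h3, h4, h5⟩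
    refine ⟨Fin.cases h1 fun j => ?_, Fin.cases h2 h4, Fin.cases (Fin.cases ?_ fun j _ => h3 j)
      fun j => Fin.cases ?_ fun j' h => h5 j j' (Fin.succ_le_succ_iff.1 h)⟩
    · exact h1.trans (h3 j)
    · exact fun _ => Or.inr ⟨rfl, le_rfl⟩
    · exact fun h => absurd h (by simp)

theorem placementSum_cons (n : ℕ) (s : ℕ × ℕ) (z : ℕ) (C : List ℕ) :
    placementSum n s (z :: C) =
      ∑ i : Fin n, if BiletterLE s (i, z) ∧ (i : ℕ) ≤ (2 * n - z) / 2 then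
        MvPolynomial.X i * placementSum n (i, z) C else 0 := by
  have h : ∀ i : Fin n, (if BiletterLE s (i, z) ∧ (i : ℕ) ≤ (2 * n - z) / 2 then
        MvPolynomial.X i * placementSum n (i, z) C else 0) =
      ∑ q : Fin C.length → Fin n,
        if (Fin.cons i q : Fin (C.length + 1) → Fin n) ∈ placements n s (z :: C) then
          (MvPolynomial.X i * ∏ j, MvPolynomial.X (q j) : MvPolynomial (Fin n) ℤ) else 0 := by
    intro i
    simp only [cons_mem_placements]
    by_cases hi : BiletterLE s (i, z) ∧ (i : ℕ) ≤ (2 * n - z) / 2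
    · simp only [hi, true_and, if_true, and_self]
      rw [← Finset.sum_filter, placementSum, Finset.mul_sum]
      simp
    · simp [hi]
  simp_rw [h]
  rw [← Fintype.sum_prod_type', placementSum, ← Finset.sum_ite_mem_eq]
  refine (Fintype.sum_equiv (Fin.consEquiv fun _ => Fin n) _ _ fun x => ?_).symm
  simp only [Fin.consEquiv, Equiv.coe_fn_mk, List.length_cons, Fin.prod_univ_succ, Fin.cons_zero,
    Fin.cons_succ]

theorem sum_map_placementSum_cons (n : ℕ) (s : ℕ × ℕ) (z : ℕ) (M : Multiset (List ℕ)) :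
    (M.map fun C => placementSum n s (z :: C)).sum =
      ∑ i : Fin n, if BiletterLE s (i, z) ∧ (i : ℕ) ≤ (2 * n - z) / 2 then
        MvPolynomial.X i * (M.map (placementSum n (i, z))).sum else 0 := by
  induction M using Multiset.induction_on with
  | empty => simp
  | cons C M ih =>
    rw [Multiset.map_cons, Multiset.sum_cons, ih, placementSum_cons, ← Finset.sum_add_distrib]
    refine Finset.sum_congr rfl fun i _ => ?_
    split_ifs
    · rw [Multiset.map_cons, Multiset.sum_cons, mul_add]
    · rw [add_zero]

theorem placementSum_mul (n : ℕ) (A B : List ℕ) :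
    (∀ x ∈ A, ∀ y ∈ B, x ≠ y) → ∀ s, placementSum n s A * placementSum n s B =
      ((shuffles A B).map (placementSum n s)).sum := by
  induction A, B using shuffles.induct with
  | case1 B => intro _ s; simp [shuffles, placementSum_nil]
  | case2 A hA =>
    intro _ s
    cases A <;> simp [shuffles, placementSum_nil]
  | case3 x A y B ihA ihB =>
    intro hxy s
    have hne : x ≠ y := hxy x (by simp) y (by simp)
    have ihA' := ihA fun u hu v hv => hxy u (List.mem_cons_of_mem _ hu) v hv
    have ihB' := ihB fun u hu v hv => hxy u hu v (List.mem_cons_of_mem _ hv)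
    rw [shuffles, Multiset.map_add, Multiset.sum_add, Multiset.map_map, Multiset.map_map]
    simp only [Function.comp_def, sum_map_placementSum_cons]
    simp only [← ihA', ← ihB', placementSum_cons n _ x A, placementSum_cons n _ y B]
    rw [Finset.sum_mul_sum]
    have h1 : ∀ i : Fin n, (if BiletterLE s (i, x) ∧ (i : ℕ) ≤ (2 * n - x) / 2 then
        MvPolynomial.X i * (placementSum n (i, x) A *
          ∑ j : Fin n, if BiletterLE (i, x) (j, y) ∧ (j : ℕ) ≤ (2 * n - y) / 2 then
            MvPolynomial.X j * placementSum n (j, y) B else 0) else 0) =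
        ∑ j : Fin n, if BiletterLE s (i, x) ∧ (i : ℕ) ≤ (2 * n - x) / 2 then
          MvPolynomial.X i * (placementSum n (i, x) A *
            if BiletterLE (i, x) (j, y) ∧ (j : ℕ) ≤ (2 * n - y) / 2 then
              MvPolynomial.X j * placementSum n (j, y) B else 0) else 0 := by
      intro i
      split_ifs
      · rw [Finset.mul_sum, Finset.mul_sum]
      · simp
    have h2 : ∀ j : Fin n, (if BiletterLE s (j, y) ∧ (j : ℕ) ≤ (2 * n - y) / 2 then
        MvPolynomial.X j * ((∑ i : Fin n,
          if BiletterLE (j, y) (i, x) ∧ (i : ℕ) ≤ (2 * n - x) / 2 then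
            MvPolynomial.X i * placementSum n (i, x) A else 0) * placementSum n (j, y) B) else 0) =
        ∑ i : Fin n, if BiletterLE s (j, y) ∧ (j : ℕ) ≤ (2 * n - y) / 2 then
          MvPolynomial.X j * ((if BiletterLE (j, y) (i, x) ∧ (i : ℕ) ≤ (2 * n - x) / 2 then
            MvPolynomial.X i * placementSum n (i, x) A else 0) * placementSum n (j, y) B)
          else 0 := by
      intro j
      split_ifs
      · rw [Finset.sum_mul, Finset.mul_sum]
      · simp
    simp only [h1, h2]
    rw [Finset.sum_comm (f := fun j i : Fin n => if BiletterLE s (j, y) ∧ (j : ℕ) ≤ (2 * n - y) / 2 then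
          MvPolynomial.X j * ((if BiletterLE (j, y) (i, x) ∧ (i : ℕ) ≤ (2 * n - x) / 2 then
            MvPolynomial.X i * placementSum n (i, x) A else 0) * placementSum n (j, y) B)
          else 0), ← Finset.sum_add_distrib]
    refine Finset.sum_congr rfl fun i _ => ?_
    rw [← Finset.sum_add_distrib]
    refine Finset.sum_congr rfl fun j _ => ?_
    by_cases hi : (i : ℕ) ≤ (2 * n - x) / 2
    · by_cases hj : (j : ℕ) ≤ (2 * n - y) / 2
      · by_cases hij : BiletterLE (i, x) (j, y)
        · have hji : ¬ BiletterLE (j, y) (i, x) := by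
            unfold BiletterLE at *
            simp only at *
            omega
          by_cases hs : BiletterLE s (i, x)
          · simp [hi, hj, hij, hji, hs, hs.trans hij, mul_assoc]
          · simp [hji, hs]
        · have hji : BiletterLE (j, y) (i, x) := by
            unfold BiletterLE at *
            simp only at *
            omega
          by_cases hs : BiletterLE s (j, y)
          · simp only [hi, hj, hij, hji, hs, hs.trans hji, and_self, if_true, false_and, if_false,
              mul_zero, zero_add]
            ring
          · simp [hij, hs]
      · simp [hj]
    · simp [hi]

theorem refines_iff {β α : List ℕ} (hβ : ∀ x ∈ β, x ≠ 0) :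
    Refines β α ↔ α.sum = β.sum ∧ ∀ k, ∃ m, (α.take k).sum = (β.take m).sum := by
  constructor
  · rintro ⟨L, rfl, rfl⟩
    refine ⟨List.sum_flatten.symm, fun k => ⟨((L.take k).map List.length).sum, ?_⟩⟩
    rw [← List.map_take, ← List.sum_flatten]
    congr 1
    rw [List.map_take, List.take_sum_flatten]
  · induction α generalizing β with
    | nil =>
      rintro ⟨h, -⟩
      refine ⟨[], ?_, rfl⟩
      cases β with
      | nil => rfl
      | cons x β => exact absurd (by simp at h; omega) (hβ x (by simp))
    | cons x α ih =>
      rintro ⟨h, hk⟩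
      obtain ⟨m, hm⟩ := hk 1
      simp only [List.take_succ_cons, List.take_zero, List.sum_cons, List.sum_nil,
        add_zero] at hm
      have hsum := List.sum_take_add_sum_drop β m
      rw [List.sum_cons] at h
      obtain ⟨L, hL, hL'⟩ := ih (β := β.drop m) (fun y hy => hβ y (List.mem_of_mem_drop hy))
        ⟨by omega, fun k => by
          obtain ⟨m', hm'⟩ := hk (k + 1)
          rw [List.take_succ_cons, List.sum_cons] at hm'
          rcases le_total m m' with h' | h'
          · refine ⟨m' - m, ?_⟩
            have : (β.take m').sum = (β.take m).sum + ((β.drop m).take (m' - m)).sum := by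
              obtain ⟨d, rfl⟩ := Nat.exists_eq_add_of_le h'
              rw [List.take_add, List.sum_append, Nat.add_sub_cancel_left]
            omega
          · refine ⟨0, ?_⟩
            have : (β.take m').sum ≤ (β.take m).sum :=
              List.Sublist.sum_le_sum (List.take_sublist_take_left h') fun _ _ => Nat.zero_le _
            simp only [List.take_zero, List.sum_nil]
            omega⟩
      exact ⟨β.take m :: L, by simp [hL], by simp [hL', hm]⟩

theorem exists_sum_take_filter (l : List ℕ) (i : ℕ) :
    ∃ k, ((l.filter fun x => x ≠ 0).take k).sum = (l.take i).sum := by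
  refine ⟨((l.take i).filter fun x => x ≠ 0).length, ?_⟩
  have h : (l.filter fun x => x ≠ 0) =
      (l.take i).filter (fun x => x ≠ 0) ++ (l.drop i).filter fun x => x ≠ 0 := by
    rw [← List.filter_append, List.take_append_drop]
  rw [h, List.take_left' rfl]
  induction l.take i with
  | nil => rfl
  | cons x l ih => by_cases hx : x = 0 <;> simp_all

theorem exists_sum_take_of_filter (l : List ℕ) (k : ℕ) :
    ∃ i ≤ l.length, (l.take i).sum = ((l.filter fun x => x ≠ 0).take k).sum := by
  induction l generalizing k with
  | nil => exact ⟨0, le_rfl, by simp⟩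
  | cons x l ih =>
    by_cases hx : x = 0
    · obtain ⟨i, hi, h⟩ := ih k
      exact ⟨i + 1, by simpa using hi, by simpa [hx] using h⟩
    · cases k with
      | zero => exact ⟨0, Nat.zero_le _, by simp⟩
      | succ k =>
        obtain ⟨i, hi, h⟩ := ih k
        exact ⟨i + 1, by simpa using hi, by simpa [hx] using h⟩

theorem psum_eq_sum_take {n : ℕ} (a : Fin n → ℕ) (i : ℕ) :
    psum a i = ((List.ofFn a).take i).sum := by
  rw [psum, Finset.sum_filter]
  induction n generalizing i with
  | zero => simp
  | succ n ih =>
    cases i with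
    | zero => simp
    | succ i =>
      rw [List.ofFn_succ, List.take_succ_cons, List.sum_cons, ← ih, Fin.sum_univ_succ]
      simp

theorem refines_flat_iff {n : ℕ} (f g : Fin n → ℕ) :
    Refines (flat f) (flat g) ↔
      ∑ i, g i = ∑ i, f i ∧ ∀ i ≤ n, ∃ i' ≤ n, psum g i = psum f i' := by
  have hsum : ∀ h : Fin n → ℕ, (flat h).sum = ∑ i, h i := fun h => by
    rw [← List.sum_ofFn, flat]
    induction List.ofFn h with
    | nil => rfl
    | cons x l ih => by_cases hx : x = 0 <;> simp_all
  rw [refines_iff (by simp [flat]), hsum, hsum]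
  refine and_congr_right fun _ => ⟨fun h i hi => ?_, fun h k => ?_⟩
  · obtain ⟨k, hk⟩ := exists_sum_take_filter (List.ofFn g) i
    obtain ⟨m, hm⟩ := h k
    obtain ⟨i', hi', h'⟩ := exists_sum_take_of_filter (List.ofFn f) m
    refine ⟨i', by simpa using hi', ?_⟩
    rw [psum_eq_sum_take, psum_eq_sum_take, ← hk, h']
    exact hm
  · obtain ⟨i, hi, h'⟩ := exists_sum_take_of_filter (List.ofFn g) k
    obtain ⟨i', hi', h''⟩ := h i (by simpa using hi)
    obtain ⟨m, hm⟩ := exists_sum_take_filter (List.ofFn f) i'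
    refine ⟨m, ?_⟩
    rw [psum_eq_sum_take, psum_eq_sum_take] at h''
    exact h'.symm.trans (h''.trans hm.symm)

/-- The weak composition recording the fiber sizes of `u`. -/
def content {n : ℕ} {J : Type*} [Fintype J] (u : J → Fin n) : Fin n → ℕ :=
  fun i => (Finset.univ.filter fun j => u j = i).card

theorem psum_content {n : ℕ} {J : Type*} [Fintype J] (u : J → Fin n) (i : ℕ) :
    psum (content u) i = (Finset.univ.filter fun j => (u j : ℕ) < i).card := by
  rw [psum, Finset.card_eq_sum_card_fiberwise
    (t := Finset.univ.filter fun j : Fin n => (j : ℕ) < i) (f := u)]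
  · refine Finset.sum_congr rfl fun j hj => ?_
    rw [content, Finset.filter_filter]
    congr 1
    ext k
    simp only [Finset.mem_filter, Finset.mem_univ, true_and] at hj ⊢
    exact ⟨fun h => ⟨h ▸ hj, h⟩, fun h => h.2⟩
  · intro j hj
    simpa using hj

theorem sum_content {n : ℕ} {J : Type*} [Fintype J] (u : J → Fin n) :
    ∑ i, content u i = Fintype.card J := by
  rw [← Finset.card_univ, Finset.card_eq_sum_card_fiberwise (t := Finset.univ) (f := u)
    fun _ _ => by simp]
  rfl

theorem dominates_content_iff {n : ℕ} {J : Type*} [Fintype J] [LinearOrder J]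
    {u v : J → Fin n} (hu : Monotone u) (hv : Monotone v) :
    Dominates (content u) (content v) ↔ ∀ j, u j ≤ v j := by
  simp only [Dominates, psum_content]
  constructor
  · intro h j
    by_contra! hj
    have h1 := h (v j).succ
    have h2 : (Finset.univ.filter fun k => k ≤ j).card ≤
        (Finset.univ.filter fun k => (v k : ℕ) < (v j).succ).card :=
      Finset.card_le_card fun k hk => by
        simp only [Finset.mem_filter, Finset.mem_univ, true_and] at hk ⊢
        exact Nat.lt_succ_of_le (hv hk)
    have h3 : (Finset.univ.filter fun k => (u k : ℕ) < (v j).succ).card ≤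
        (Finset.univ.filter fun k => k < j).card :=
      Finset.card_le_card fun k hk => by
        simp only [Finset.mem_filter, Finset.mem_univ, true_and] at hk ⊢
        by_contra! hk'
        have := hu hk'
        simp only [Fin.val_succ, Fin.lt_def, Fin.le_def] at *
        omega
    have h4 : (Finset.univ.filter fun k => k < j).card <
        (Finset.univ.filter fun k => k ≤ j).card :=
      Finset.card_lt_card ⟨fun k hk => by
        simp only [Finset.mem_filter, Finset.mem_univ, true_and] at hk ⊢
        exact hk.le, fun hk => by
        have := hk (x := j) (by simp)
        simp at this⟩
    omega
  · intro h i
    refine Finset.card_le_card fun k hk => ?_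
    simp only [Finset.mem_filter, Finset.mem_univ, true_and] at hk ⊢
    exact lt_of_le_of_lt (h k) hk

theorem refines_flat_content_iff {n : ℕ} {J : Type*} [Fintype J] [LinearOrder J]
    {u v : J → Fin n} (hu : Monotone u) (hv : Monotone v) :
    Refines (flat (content u)) (flat (content v)) ↔ ∀ j j', v j < v j' → u j < u j' := by
  simp only [refines_flat_iff, sum_content, psum_content, true_and]
  constructor
  · intro h j j' hj
    obtain ⟨i, -, hi⟩ := h (v j') (v j').2.le
    by_contra! hle
    rcases lt_or_ge (u j : ℕ) i with hji | hji
    · refine absurd hi (Finset.card_lt_card ⟨fun k hk => ?_, fun hk => ?_⟩).ne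
      · simp only [Finset.mem_filter, Finset.mem_univ, true_and] at hk ⊢
        have : k ≤ j' := by
          by_contra! hk'
          exact absurd (hv hk'.le) (not_le.2 hk)
        exact lt_of_le_of_lt ((hu this).trans hle) hji
      · have := hk (x := j') (by simpa using lt_of_le_of_lt (Fin.le_def.1 hle) hji)
        simp at this
    · refine absurd hi (Finset.card_lt_card ⟨fun k hk => ?_, fun hk => ?_⟩).ne'
      · simp only [Finset.mem_filter, Finset.mem_univ, true_and] at hk ⊢
        have : k ≤ j := by
          by_contra! hk'
          exact absurd (hu hk'.le) (not_le.2 (Fin.lt_def.2 (lt_of_lt_of_le hk hji)))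
        exact lt_of_le_of_lt (hv this) hj
      · have := hk (x := j) (by simpa using hj)
        simp only [Finset.mem_filter, Finset.mem_univ, true_and] at this
        omega
  · intro h i hi
    by_cases hne : (Finset.univ.filter fun k => i ≤ (v k : ℕ)).Nonempty
    · set m := (Finset.univ.filter fun k => i ≤ (v k : ℕ)).min' hne with hm
      have hmv : i ≤ (v m : ℕ) := by
        have := Finset.min'_mem _ hne
        rw [← hm] at this
        simpa using this
      refine ⟨u m, (u m).2.le, congrArg Finset.card (Finset.filter_congr fun k _ => ?_)⟩
      constructor
      · intro hk
        exact h k m (Fin.lt_def.2 (lt_of_lt_of_le hk hmv))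
      · intro hk
        by_contra! hk'
        exact absurd (hu (Finset.min'_le _ k (by simpa using hk'))) (not_le.2 hk)
    · refine ⟨n, le_rfl, congrArg Finset.card (Finset.filter_congr fun k _ => ?_)⟩
      simp only [Finset.not_nonempty_iff_eq_empty, Finset.filter_eq_empty_iff, Finset.mem_univ,
        true_imp_iff, not_le] at hne
      simp [hne]

theorem monomial_content {n : ℕ} {J : Type*} [Fintype J] (p : J → Fin n) :
    MvPolynomial.monomial (Finsupp.equivFunOnFinite.symm (content p)) (1 : ℤ) =
      ∏ j, MvPolynomial.X (p j) := by
  have h : Finsupp.equivFunOnFinite.symm (content p) = ∑ j, Finsupp.single (p j) 1 := by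
    ext i
    simp [content, Finsupp.finsetSum_apply, Finsupp.single_apply]
  rw [h, MvPolynomial.monomial_sum_one]
  rfl

theorem eq_of_content_eq {n : ℕ} {J : Type*} [Fintype J] [LinearOrder J] {p q : J → Fin n}
    (hp : Monotone p) (hq : Monotone q) (h : content p = content q) : p = q := by
  funext j
  refine le_antisymm ((dominates_content_iff hp hq).1 ?_ j) ((dominates_content_iff hq hp).1 ?_ j)
  all_goals
    rw [h]
    exact fun _ => le_rfl

theorem exists_monotone_content_eq {n N : ℕ} (f : Fin n → ℕ) (hf : ∑ i, f i = N) :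
    ∃ p : Fin N → Fin n, Monotone p ∧ content p = f := by
  have e : Fin N ≃ (i : Fin n) × Fin (f i) := Fintype.equivOfCardEq (by simp [hf])
  refine ⟨_, Tuple.monotone_sort fun j => (e j).1, ?_⟩
  funext i
  rw [content, ← Fintype.card_subtype, ← Fintype.card_fin (f i)]
  refine Fintype.card_congr <| (((Tuple.sort fun j => (e j).1).trans e).subtypeEquiv
    (q := fun x => x.1 = i) fun j => Iff.rfl).trans (Equiv.sigmaSubtype i)

theorem slideF_content {n N : ℕ} {w : Fin N → Fin n} (hw : Monotone w) :
    slideF (content w) = ∑ p ∈ (Finset.univ : Finset (Fin N → Fin n)).filter fun p =>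
      Monotone p ∧ (∀ j, p j ≤ w j) ∧ ∀ j j', w j < w j' → p j < p j',
        ∏ j, MvPolynomial.X (p j) := by
  refine (Finset.sum_bij (fun p _ => content p) (fun p hp => ?_) (fun p hp q hq h => ?_)
    (fun f hf => ?_) fun p _ => (monomial_content p).symm).symm
  · simp only [Finset.mem_filter, Finset.mem_univ, true_and] at hp
    rw [Finset.mem_filter, dominates_content_iff hp.1 hw, refines_flat_content_iff hp.1 hw]
    refine ⟨Fintype.mem_piFinset.2 fun i => Finset.mem_range_succ_iff.2 ?_, hp.2⟩
    rw [sum_content, ← sum_content p]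
    exact Finset.single_le_sum (fun _ _ => Nat.zero_le _) (Finset.mem_univ i)
  · simp only [Finset.mem_filter, Finset.mem_univ, true_and] at hp hq
    exact eq_of_content_eq hp.1 hq.1 h
  · obtain ⟨-, hd, hr⟩ := Finset.mem_filter.1 hf
    obtain ⟨p, hp, rfl⟩ := exists_monotone_content_eq (N := N) f (by
      rw [← ((refines_flat_iff _ _).1 hr).1, sum_content, Fintype.card_fin])
    rw [dominates_content_iff hp hw] at hd
    rw [refines_flat_content_iff hp hw] at hr
    exact ⟨p, by simp only [Finset.mem_filter, Finset.mem_univ, true_and]; exact ⟨hp, hd, hr⟩, rfl⟩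

theorem card_filter_get {α : Type*} (l : List α) (P : α → Bool) :
    (Finset.univ.filter fun j : Fin l.length => P (l.get j)).card = l.countP P := by
  induction l with
  | nil => rfl
  | cons x l ih =>
    rw [List.countP_cons, ← ih]
    simp only [List.length_cons, Fin.card_filter_univ_succ', List.get_cons_zero]
    exact add_comm _ _

theorem placementSum_eq_slideF {n : ℕ} {C : List ℕ} {a : Fin n → ℕ} {w : Fin C.length → Fin n}
    (hw : Monotone w) (hwa : content w = a)
    (h : ∀ p : Fin C.length → Fin n, p ∈ placements n (0, 0) C ↔
      Monotone p ∧ (∀ j, p j ≤ w j) ∧ ∀ j j', w j < w j' → p j < p j') :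
    placementSum n (0, 0) C = slideF a := by
  rw [← hwa, slideF_content hw, placementSum]
  exact Finset.sum_congr (by ext p; simp [h]) fun _ _ => rfl

theorem zero_biletterLE (s : ℕ × ℕ) : BiletterLE (0, 0) s := by
  unfold BiletterLE
  simp only
  omega

theorem pairwise_flatten_replicate {n : ℕ} (a g : Fin n → ℕ) (hg : Antitone g) :
    (List.ofFn fun i => List.replicate (a i) (g i)).flatten.Pairwise (· ≥ ·) := by
  rw [List.pairwise_flatten, List.pairwise_ofFn]
  refine ⟨fun l hl => ?_, fun i j hij x hx y hy => ?_⟩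
  · obtain ⟨i, rfl⟩ := (List.mem_ofFn' _ _).1 hl
    exact List.pairwise_replicate.2 (Or.inr le_rfl)
  · rw [List.eq_of_mem_replicate hx, List.eq_of_mem_replicate hy]
    exact hg hij.le

theorem countP_flatten_replicate {n : ℕ} (a g : Fin n → ℕ) (P : ℕ → Bool) :
    (List.ofFn fun i => List.replicate (a i) (g i)).flatten.countP P =
      ∑ i, if P (g i) then a i else 0 := by
  rw [List.countP_flatten, List.map_ofFn, List.sum_ofFn]
  refine Finset.sum_congr rfl fun i _ => ?_
  simp [List.countP_replicate]

theorem mem_flatten_replicate {n : ℕ} {a g : Fin n → ℕ} {z : ℕ}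
    (h : z ∈ (List.ofFn fun i => List.replicate (a i) (g i)).flatten) : ∃ i, z = g i := by
  obtain ⟨l, hl, hz⟩ := List.mem_flatten.1 h
  obtain ⟨i, rfl⟩ := (List.mem_ofFn' _ _).1 hl
  exact ⟨i, List.eq_of_mem_replicate hz⟩

theorem placementSum_flatten_replicate {n : ℕ} (a g : Fin n → ℕ) (hg : StrictAnti g)
    (hb : ∀ i, (2 * n - g i) / 2 = i) :
    placementSum n (0, 0) (List.ofFn fun i => List.replicate (a i) (g i)).flatten = slideF a := by
  set C := (List.ofFn fun i => List.replicate (a i) (g i)).flatten with hC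
  have hmem : ∀ j, ∃ i, C.get j = g i := fun j => mem_flatten_replicate (List.get_mem C j)
  choose w hw using hmem
  have hanti : ∀ j j', j ≤ j' → C.get j' ≤ C.get j := by
    intro j j' h
    rcases h.eq_or_lt with rfl | h
    · exact le_rfl
    · exact List.pairwise_iff_get.1 (pairwise_flatten_replicate a g hg.antitone) j j' h
  have hmono : Monotone w := fun j j' h => by
    have := hanti j j' h
    rwa [hw, hw, hg.le_iff_ge] at this
  refine placementSum_eq_slideF hmono ?_ fun p => ?_
  · funext i
    have h1 : content w i = C.countP (fun z => z = g i) := by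
      rw [← card_filter_get, content]
      congr 1
      ext j
      simp only [Finset.mem_filter, hw, hg.injective.eq_iff, decide_eq_true_eq]
    rw [h1, hC, countP_flatten_replicate]
    simp [hg.injective.eq_iff]
  · simp only [placements, Finset.mem_filter, Finset.mem_univ, true_and, zero_biletterLE,
      implies_true, hw, hb]
    constructor
    · rintro ⟨h1, h2⟩
      refine ⟨fun j j' h => ?_, h1, fun j j' h => ?_⟩
      · have := h2 j j' h
        simp only [BiletterLE] at this
        rw [Fin.le_def]
        omega
      · have h3 := h2 j j' (hmono.reflect_lt h).le
        have h4 := hg h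
        simp only [BiletterLE] at h3
        rw [Fin.lt_def]
        omega
    · rintro ⟨h1, h2, h3⟩
      refine ⟨h2, fun j j' h => ?_⟩
      rcases (hmono h).eq_or_lt with h4 | h4
      · rw [h4]
        rcases (h1 h).eq_or_lt with h5 | h5
        · exact Or.inr ⟨congrArg Fin.val h5, le_rfl⟩
        · exact Or.inl h5
      · exact Or.inl (h3 j j' h4)

theorem placementSum_wordA {n : ℕ} (a : Fin n → ℕ) :
    placementSum n (0, 0) (wordA a) = slideF a :=
  placementSum_flatten_replicate a _ (fun i j h => by omega) fun i => by omega

theorem placementSum_wordB {n : ℕ} (b : Fin n → ℕ) :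
    placementSum n (0, 0) (wordB b) = slideF b :=
  placementSum_flatten_replicate b _ (fun i j h => by omega) fun i => by omega

theorem runsWeak_cons (y : ℕ) (l : List ℕ) :
    ∃ t rs, runsWeak (y :: l) = (y :: t) :: rs ∧ t ++ rs.flatten = l ∧ (∀ r ∈ rs, r ≠ []) ∧
      (∀ r ∈ (y :: t) :: rs, r.Pairwise (· ≤ ·)) ∧
      ((y :: t) :: rs).IsChain fun r r' => ∃ u ∈ r, ∃ v ∈ r', v < u := by
  induction l generalizing y with
  | nil => exact ⟨[], [], by simp [runsWeak], by simp, by simp, by simp, by simp⟩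
  | cons z l ih =>
    obtain ⟨t, rs, h1, h2, h3, h4, h5⟩ := ih z
    by_cases hyz : y ≤ z
    · refine ⟨z :: t, rs, ?_, by simp [h2], h3, ?_, ?_⟩
      · rw [runsWeak.eq_def]
        simp [h1, hyz]
      · intro r hr
        rcases List.mem_cons.1 hr with rfl | hr
        · have h := h4 (z :: t) (by simp)
          refine List.pairwise_cons.2 ⟨fun u hu => ?_, h⟩
          rcases List.mem_cons.1 hu with rfl | hu
          · exact hyz
          · exact hyz.trans ((List.pairwise_cons.1 h).1 u hu)
        · exact h4 r (List.mem_cons_of_mem _ hr)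
      · cases rs with
        | nil => simp
        | cons r rs =>
          rw [List.isChain_cons_cons] at h5 ⊢
          obtain ⟨⟨u, hu, h⟩, h'⟩ := h5
          exact ⟨⟨u, List.mem_cons_of_mem _ hu, h⟩, h'⟩
    · refine ⟨[], (z :: t) :: rs, ?_, by simp [h2], ?_, ?_, ?_⟩
      · rw [runsWeak.eq_def]
        simp [h1, hyz]
      · intro r hr
        rcases List.mem_cons.1 hr with rfl | hr
        · simp
        · exact h3 r hr
      · intro r hr
        rcases List.mem_cons.1 hr with rfl | hr
        · simp
        · exact h4 r hr
      · rw [List.isChain_cons_cons]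
        exact ⟨⟨y, by simp, z, by simp, not_le.1 hyz⟩, h5⟩

theorem runsWeak_spec (C : List ℕ) :
    (runsWeak C).flatten = C ∧ (∀ r ∈ runsWeak C, r ≠ []) ∧
      (∀ r ∈ runsWeak C, r.Pairwise (· ≤ ·)) ∧
      (runsWeak C).IsChain fun r r' => ∃ u ∈ r, ∃ v ∈ r', v < u := by
  cases C with
  | nil => simp [runsWeak]
  | cons y l =>
    obtain ⟨t, rs, h1, h2, h3, h4, h5⟩ := runsWeak_cons y l
    rw [h1]
    refine ⟨by simp [h2], fun r hr => ?_, h4, h5⟩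
    rcases List.mem_cons.1 hr with rfl | hr
    · simp
    · exact h3 r hr

theorem exists_blockIndex {R : List (List ℕ)} (hR : ∀ r ∈ R, r.Pairwise (· ≤ ·)) :
    ∃ ρ : Fin R.flatten.length → Fin R.length, Monotone ρ ∧
      (∀ j j', j ≤ j' → ρ j = ρ j' → R.flatten.get j ≤ R.flatten.get j') ∧
      ∀ k (P : ℕ → Bool), (R.get k).countP P =
        (Finset.univ.filter fun j => P (R.flatten.get j) ∧ ρ j = k).card := by
  obtain ⟨T, hT⟩ : ∃ T : List (ℕ × Fin R.length),
      T = (List.ofFn fun k : Fin R.length => (R.get k).map fun z => (z, k)).flatten := ⟨_, rfl⟩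
  have hfst : T.map Prod.fst = R.flatten := by
    rw [hT, List.map_flatten, List.map_ofFn]
    simp only [Function.comp_def, List.map_map, List.map_id']
    rw [List.ofFn_get]
  have hpw : T.Pairwise fun s t => s.2 < t.2 ∨ (s.2 = t.2 ∧ s.1 ≤ t.1) := by
    rw [hT, List.pairwise_flatten, List.pairwise_ofFn]
    refine ⟨fun l hl => ?_, fun k k' hk s hs t ht => ?_⟩
    · obtain ⟨k, rfl⟩ := (List.mem_ofFn' _ _).1 hl
      exact List.pairwise_map.2 ((hR _ (List.get_mem R k)).imp fun h => Or.inr ⟨rfl, h⟩)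
    · obtain ⟨x, -, rfl⟩ := List.mem_map.1 hs
      obtain ⟨y, -, rfl⟩ := List.mem_map.1 ht
      exact Or.inl hk
  have hcount : ∀ k (P : ℕ → Bool), T.countP (fun t => P t.1 && decide (t.2 = k)) =
      (R.get k).countP P := by
    intro k P
    rw [hT, List.countP_flatten, List.map_ofFn, List.sum_ofFn, Finset.sum_eq_single k]
    · simp [List.countP_map, Function.comp_def]
    · intro k' _ hk
      simp [List.countP_map, Function.comp_def, hk]
    · simp
  rw [← hfst]
  have hlen : (T.map Prod.fst).length = T.length := List.length_map _
  have hget : ∀ j, (T.map Prod.fst).get j = (T.get (j.cast hlen)).1 := fun j => by simp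
  have hlex : ∀ j j' : Fin (T.map Prod.fst).length, j ≤ j' →
      (T.get (j.cast hlen)).2 < (T.get (j'.cast hlen)).2 ∨
      ((T.get (j.cast hlen)).2 = (T.get (j'.cast hlen)).2 ∧
        (T.get (j.cast hlen)).1 ≤ (T.get (j'.cast hlen)).1) := by
    intro j j' h
    rcases h.eq_or_lt with rfl | h
    · exact Or.inr ⟨rfl, le_rfl⟩
    · exact List.pairwise_iff_get.1 hpw _ _ h
  refine ⟨fun j => (T.get (j.cast hlen)).2, fun j j' h => ?_, fun j j' h hj => ?_,
    fun k P => ?_⟩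
  · rcases hlex j j' h with h | h
    · exact h.le
    · exact h.1.le
  · rw [hget, hget]
    rcases hlex j j' h with h | h
    · exact absurd hj h.ne
    · exact h.2
  · rw [← hcount, ← card_filter_get]
    refine (Finset.card_equiv (finCongr hlen) fun j => ?_).symm
    simp

theorem runsWeak_index (C : List ℕ) :
    ∃ ρ : Fin C.length → Fin (runsWeak C).length, Monotone ρ ∧
      (∀ j j', j ≤ j' → ρ j = ρ j' → C.get j ≤ C.get j') ∧
      (∀ k (P : ℕ → Bool), ((runsWeak C).get k).countP P =
        (Finset.univ.filter fun j => P (C.get j) ∧ ρ j = k).card) ∧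
      Function.Surjective ρ ∧
      ∀ k k' : Fin (runsWeak C).length, (k : ℕ) + 1 = k' →
        ∃ j j', ρ j = k ∧ ρ j' = k' ∧ C.get j' < C.get j := by
  obtain ⟨h1, h2, h3, h4⟩ := runsWeak_spec C
  have := exists_blockIndex h3
  rw [h1] at this
  obtain ⟨ρ, hρ, hle, hcount⟩ := this
  have hmem : ∀ k, ∀ z ∈ (runsWeak C).get k, ∃ j, ρ j = k ∧ C.get j = z := by
    intro k z hz
    have h : 0 < ((runsWeak C).get k).countP (fun y => decide (y = z)) :=
      List.countP_pos_iff.2 ⟨z, hz, by simp⟩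
    rw [hcount, Finset.card_pos] at h
    obtain ⟨j, hj⟩ := h
    simp only [Finset.mem_filter, Finset.mem_univ, true_and, decide_eq_true_eq] at hj
    exact ⟨j, hj.2, hj.1⟩
  refine ⟨ρ, hρ, hle, hcount, fun k => ?_, fun k k' hk => ?_⟩
  · obtain ⟨z, hz⟩ := List.exists_mem_of_ne_nil _ (h2 _ (List.get_mem _ k))
    obtain ⟨j, hj, -⟩ := hmem k z hz
    exact ⟨j, hj⟩
  · obtain ⟨k', hk'⟩ := k'
    simp only at hk
    subst hk
    obtain ⟨u, hu, v, hv, huv⟩ := List.isChain_iff_getElem.1 h4 k hk'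
    obtain ⟨j, hj, rfl⟩ := hmem k u hu
    obtain ⟨j', hj', rfl⟩ := hmem ⟨k + 1, hk'⟩ v hv
    exact ⟨j, j', hj, hj', huv⟩

theorem filter_of_mem_shuffles {P : ℕ → Bool} (A B : List ℕ) :
    (∀ x ∈ A, P x) → (∀ y ∈ B, ¬ P y) → ∀ C ∈ shuffles A B,
      C.filter P = A ∧ C.filter (fun z => !P z) = B := by
  induction A, B using shuffles.induct with
  | case1 B =>
    intro _ hB C hC
    simp only [shuffles, Multiset.mem_singleton] at hC
    subst hC
    exact ⟨List.filter_eq_nil_iff.2 hB, List.filter_eq_self.2 fun y hy => by simp [hB y hy]⟩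
  | case2 A _ =>
    intro hA _ C hC
    have hC : C = A := by cases A <;> simpa [shuffles] using hC
    subst hC
    exact ⟨List.filter_eq_self.2 hA, List.filter_eq_nil_iff.2 fun x hx => by simp [hA x hx]⟩
  | case3 x A y B ihA ihB =>
    intro hA hB C hC
    rw [shuffles, Multiset.mem_add, Multiset.mem_map, Multiset.mem_map] at hC
    have hx := hA x (by simp)
    have hy := hB y (by simp)
    rcases hC with ⟨D, hD, rfl⟩ | ⟨D, hD, rfl⟩
    · obtain ⟨h1, h2⟩ := ihA (fun z hz => hA z (List.mem_cons_of_mem _ hz)) hB D hD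
      exact ⟨by simp [hx, h1], by simp [hx, h2]⟩
    · obtain ⟨h1, h2⟩ := ihB hA (fun z hz => hB z (List.mem_cons_of_mem _ hz)) D hD
      exact ⟨by simp [hy, h1], by simp [hy, h2]⟩

theorem exists_content_eq_of_filter_eq {n : ℕ} {a g : Fin n → ℕ} (hg : StrictAnti g)
    (hb : ∀ i, (2 * n - g i) / 2 = i) {C : List ℕ} {P : ℕ → Bool}
    (hC : C.filter P = (List.ofFn fun i => List.replicate (a i) (g i)).flatten) :
    ∃ w : {j : Fin C.length // P (C.get j)} → Fin n, Monotone w ∧ content w = a ∧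
      ∀ j, (w j : ℕ) = (2 * n - C.get j) / 2 := by
  have hmem : ∀ j : {j : Fin C.length // P (C.get j)}, ∃ i, C.get j = g i := fun j => by
    refine mem_flatten_replicate (a := a) ?_
    rw [← hC]
    exact List.mem_filter.2 ⟨List.get_mem _ _, j.2⟩
  choose w hw using hmem
  refine ⟨w, fun j j' h => ?_, ?_, fun j => by rw [hw, hb]⟩
  · rcases h.eq_or_lt with rfl | h
    · exact le_rfl
    · have h1 := pairwise_flatten_replicate a g hg.antitone
      rw [← hC, List.pairwise_filter, List.pairwise_iff_get] at h1
      have h2 := h1 j j' h j.2 j'.2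
      rwa [hw, hw, ge_iff_le, hg.le_iff_ge] at h2
  · funext i
    have h1 : content w i = C.countP (fun z => decide (z = g i) && P z) := by
      rw [← card_filter_get, content]
      refine Finset.card_bij (fun j _ => j.1) (fun j hj => ?_) (fun _ _ _ _ h => Subtype.ext h)
        fun j hj => ?_
      · simp only [Finset.mem_filter, Finset.mem_univ, true_and, Bool.and_eq_true,
          decide_eq_true_eq] at hj ⊢
        exact ⟨by rw [hw, hj], j.2⟩
      · simp only [Finset.mem_filter, Finset.mem_univ, true_and, Bool.and_eq_true,
          decide_eq_true_eq] at hj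
        refine ⟨⟨j, hj.2⟩, ?_, rfl⟩
        simp only [Finset.mem_filter, Finset.mem_univ, true_and]
        exact hg.injective ((hw ⟨j, hj.2⟩).symm.trans hj.1)
    rw [h1, ← List.countP_filter, hC, countP_flatten_replicate]
    simp [hg.injective.eq_iff]

theorem spread_eq_content {n l N : ℕ} (ι : Fin l → Fin n) (ρ : Fin N → Fin l)
    (Q : Fin N → Bool) (f : Fin l → ℕ)
    (hf : ∀ k, f k = (Finset.univ.filter fun j => Q j ∧ ρ j = k).card) :
    spread ι f = content fun j : {j // Q j} => ι (ρ j) := by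
  funext i
  have h : content (fun j : {j // Q j} => ι (ρ j)) i =
      (Finset.univ.filter fun j => Q j ∧ ι (ρ j) = i).card := by
    refine Finset.card_bij (fun j _ => j.1) (fun j hj => ?_) (fun _ _ _ _ h => Subtype.ext h)
      fun j hj => ?_
    · simpa using ⟨j.2, by simpa using hj⟩
    · simp only [Finset.mem_filter, Finset.mem_univ, true_and] at hj
      exact ⟨⟨j, hj.1⟩, by simpa using hj.2, rfl⟩
  rw [h, spread, Finset.card_eq_sum_card_fiberwise (t := Finset.univ) (f := ρ)
    fun _ _ => by simp]
  refine Finset.sum_congr rfl fun k _ => ?_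
  rw [Finset.filter_filter]
  split_ifs with hk
  · rw [hf]
    congr 1
    ext j
    simp only [Finset.mem_filter, Finset.mem_univ, true_and]
    exact ⟨fun h => ⟨⟨h.1, by rw [h.2, hk]⟩, h.2⟩, fun h => ⟨h.1.1, h.2⟩⟩
  · refine (Finset.card_eq_zero.2 (Finset.filter_eq_empty_iff.2 fun j _ hj => hk ?_)).symm
    rw [← hj.2, hj.1.2]

theorem dominates_spread_iff {n l : ℕ} {a g : Fin n → ℕ} (hg : StrictAnti g)
    (hb : ∀ i, (2 * n - g i) / 2 = i) {C : List ℕ} {P : ℕ → Bool}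
    (hC : C.filter P = (List.ofFn fun i => List.replicate (a i) (g i)).flatten)
    {ρ : Fin C.length → Fin l} (hρ : Monotone ρ) {f : Fin l → ℕ}
    (hf : ∀ k, f k = (Finset.univ.filter fun j => P (C.get j) ∧ ρ j = k).card)
    {ι : Fin l → Fin n} (hι : StrictMono ι) :
    Dominates (spread ι f) a ↔
      ∀ j, P (C.get j) → (ι (ρ j) : ℕ) ≤ (2 * n - C.get j) / 2 := by
  obtain ⟨w, hw, rfl, hwj⟩ := exists_content_eq_of_filter_eq hg hb hC
  rw [spread_eq_content ι ρ (fun j => P (C.get j)) f hf,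
    dominates_content_iff (u := fun j : {j // P (C.get j)} => ι (ρ j))
      (fun _ _ h => hι.monotone (hρ h)) hw]
  simp only [Fin.le_def, hwj, Subtype.forall]

theorem mem_wordA {n : ℕ} {a : Fin n → ℕ} {z : ℕ} (hz : z ∈ wordA a) : z % 2 = 1 := by
  obtain ⟨i, rfl⟩ := mem_flatten_replicate hz
  omega

theorem mem_wordB {n : ℕ} {b : Fin n → ℕ} {z : ℕ} (hz : z ∈ wordB b) : z % 2 = 0 := by
  obtain ⟨i, rfl⟩ := mem_flatten_replicate hz
  omega

theorem filter_of_mem_shuffles_words {n : ℕ} {a b : Fin n → ℕ} {C : List ℕ}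
    (hC : C ∈ shuffles (wordA a) (wordB b)) :
    C.filter (fun z => decide (z % 2 = 1)) = wordA a ∧
      C.filter (fun z => decide (z % 2 = 0)) = wordB b := by
  have h := filter_of_mem_shuffles (P := fun z => decide (z % 2 = 1)) _ _
    (fun x hx => by simpa using mem_wordA hx) (fun y hy => by simpa using mem_wordB hy) C hC
  refine ⟨h.1, ?_⟩
  rw [← h.2]
  refine List.filter_congr fun z _ => ?_
  rcases Nat.mod_two_eq_zero_or_one z with h | h <;> simp [h]

/-- Both dominance conditions on an insertion say that every letter respects its bound. -/
theorem dominates_runCount_iff {n : ℕ} {a b : Fin n → ℕ} {C : List ℕ}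
    (hC : C ∈ shuffles (wordA a) (wordB b))
    {ρ : Fin C.length → Fin (runsWeak C).length} (hρ : Monotone ρ)
    (hcount : ∀ k (P : ℕ → Bool), ((runsWeak C).get k).countP P =
      (Finset.univ.filter fun j => P (C.get j) ∧ ρ j = k).card)
    {ι : Fin (runsWeak C).length → Fin n} (hι : StrictMono ι) :
    Dominates (spread ι (runCountA C)) a ∧ Dominates (spread ι (runCountB C)) b ↔
      ∀ j, (ι (ρ j) : ℕ) ≤ (2 * n - C.get j) / 2 := by
  obtain ⟨hA, hB⟩ := filter_of_mem_shuffles_words hC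
  rw [dominates_spread_iff (fun i j h => by omega) (fun i => by omega) hA hρ
      (fun k => by rw [runCountA, ← List.countP_eq_length_filter, hcount]) hι,
    dominates_spread_iff (fun i j h => by omega) (fun i => by omega) hB hρ
      (fun k => by rw [runCountB, ← List.countP_eq_length_filter, hcount]) hι]
  simp only [decide_eq_true_eq]
  refine ⟨fun h j => ?_, fun h => ⟨fun j _ => h j, fun j _ => h j⟩⟩
  rcases Nat.mod_two_eq_zero_or_one (C.get j) with hj | hj
  · exact h.2 j hj
  · exact h.1 j hj

theorem spread_runLen_eq_content {n : ℕ} {C : List ℕ}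
    {ρ : Fin C.length → Fin (runsWeak C).length}
    (hcount : ∀ k (P : ℕ → Bool), ((runsWeak C).get k).countP P =
      (Finset.univ.filter fun j => P (C.get j) ∧ ρ j = k).card)
    (ι : Fin (runsWeak C).length → Fin n) :
    spread ι (runLen C) = content fun j => ι (ρ j) := by
  rw [spread_eq_content ι ρ (fun _ => true) (runLen C) fun k => by
    have := hcount k fun _ => true
    simpa [runLen] using this]
  funext i
  exact Finset.card_bij (fun j _ => j.1) (fun j hj => by simpa using hj)
    (fun _ _ _ _ h => Subtype.ext h) fun j hj => ⟨⟨j, rfl⟩, by simpa using hj, rfl⟩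

/-- `ρ` sends each position of `C` to the index of the weakly increasing run containing it. -/
structure IsRunIndex (C : List ℕ) (ρ : Fin C.length → Fin (runsWeak C).length) : Prop where
  monotone : Monotone ρ
  get_le : ∀ j j', j ≤ j' → ρ j = ρ j' → C.get j ≤ C.get j'
  count : ∀ k (P : ℕ → Bool), ((runsWeak C).get k).countP P =
    (Finset.univ.filter fun j => P (C.get j) ∧ ρ j = k).card
  surjective : Function.Surjective ρ
  descent : ∀ k k' : Fin (runsWeak C).length, (k : ℕ) + 1 = k' →
    ∃ j j', ρ j = k ∧ ρ j' = k' ∧ C.get j' < C.get j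

theorem exists_isRunIndex (C : List ℕ) : ∃ ρ, IsRunIndex C ρ := by
  obtain ⟨ρ, h1, h2, h3, h4, h5⟩ := runsWeak_index C
  exact ⟨ρ, h1, h2, h3, h4, h5⟩

theorem monotone_of_mem_placements {n : ℕ} {s : ℕ × ℕ} {C : List ℕ} {p : Fin C.length → Fin n}
    (hp : p ∈ placements n s C) : Monotone p := by
  simp only [placements, Finset.mem_filter, Finset.mem_univ, true_and] at hp
  intro j j' h
  rcases hp.2.2 j j' h with h | h
  · exact le_of_lt h
  · exact le_of_eq (Fin.ext h.1)

namespace IsRunIndex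

variable {n : ℕ} {C : List ℕ} {ρ : Fin C.length → Fin (runsWeak C).length}

theorem exists_last (hρ : IsRunIndex C ρ) (k : Fin (runsWeak C).length) :
    ∃ m, ρ m = k ∧ ∀ j, ρ j ≤ k → j ≤ m := by
  have hne : (Finset.univ.filter fun j => ρ j = k).Nonempty :=
    let ⟨j, hj⟩ := hρ.surjective k
    ⟨j, by simpa using hj⟩
  obtain ⟨m, hm, hmax⟩ := Finset.exists_max_image _ id hne
  have hm : ρ m = k := by simpa using hm
  refine ⟨m, hm, fun j hj => ?_⟩
  rcases hj.lt_or_eq with hj | hj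
  · exact le_of_not_gt fun h => absurd (hρ.monotone h.le) (by rw [hm]; exact not_le_of_gt hj)
  · exact hmax j (by simpa using hj)

theorem exists_first (hρ : IsRunIndex C ρ) (k : Fin (runsWeak C).length) :
    ∃ m, ρ m = k ∧ ∀ j, k ≤ ρ j → m ≤ j := by
  have hne : (Finset.univ.filter fun j => ρ j = k).Nonempty :=
    let ⟨j, hj⟩ := hρ.surjective k
    ⟨j, by simpa using hj⟩
  obtain ⟨m, hm, hmin⟩ := Finset.exists_min_image _ id hne
  have hm : ρ m = k := by simpa using hm
  refine ⟨m, hm, fun j hj => ?_⟩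
  rcases hj.lt_or_eq with hj | hj
  · exact le_of_not_gt fun h => absurd (hρ.monotone h.le) (by rw [hm]; exact not_le_of_gt hj)
  · exact hmin j (by simpa using hj.symm)

/-- A placement is strictly increasing across runs. -/
theorem placement_lt (hρ : IsRunIndex C ρ) {s : ℕ × ℕ} {p : Fin C.length → Fin n}
    (hp : p ∈ placements n s C) {j j' : Fin C.length} (h : ρ j < ρ j') : p j < p j' := by
  have hmono := monotone_of_mem_placements hp
  have hlt : (ρ j : ℕ) + 1 < (runsWeak C).length := by have := (ρ j').2; omega
  obtain ⟨m, hm, hmj⟩ := hρ.exists_last (ρ j)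
  obtain ⟨m', hm', hmj'⟩ := hρ.exists_first ⟨ρ j + 1, hlt⟩
  obtain ⟨x, y, hx, hy, hxy⟩ := hρ.descent (ρ j) ⟨ρ j + 1, hlt⟩ rfl
  have h1 := hρ.get_le x m (hmj x hx.le) (hx.trans hm.symm)
  have h2 := hρ.get_le m' y (hmj' y hy.ge) (hm'.trans hy.symm)
  have hmm : m ≤ m' := le_of_not_gt fun h => by
    have := hρ.monotone h.le
    rw [hm, hm', Fin.le_def] at this
    simp at this
  refine (hmono (hmj j le_rfl)).trans_lt (lt_of_lt_of_le ?_ (hmono (hmj' j' h)))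
  simp only [placements, Finset.mem_filter, Finset.mem_univ, true_and] at hp
  rcases hp.2.2 m m' hmm with h | h
  · exact h
  · have := h.2
    omega

/-- The insertion placing every run at the position of its last letter in a placement. -/
theorem exists_insertion_of_mem_placements (hρ : IsRunIndex C ρ) {s : ℕ × ℕ}
    {p : Fin C.length → Fin n} (hp : p ∈ placements n s C) :
    ∃ ι : Fin (runsWeak C).length → Fin n, StrictMono ι ∧
      (∀ j, (ι (ρ j) : ℕ) ≤ (2 * n - C.get j) / 2) ∧ ∀ j, p j ≤ ι (ρ j) := by
  choose m hm hle using hρ.exists_last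
  refine ⟨fun k => p (m k), fun k k' h => hρ.placement_lt hp (by rwa [hm, hm]), fun j => ?_,
    fun j => monotone_of_mem_placements hp (hle _ j le_rfl)⟩
  have h1 := hρ.get_le j _ (hle _ j le_rfl) (hm _).symm
  simp only [placements, Finset.mem_filter, Finset.mem_univ, true_and] at hp
  refine (hp.2.1 _).trans ?_
  omega

theorem dominates_runLen_iff (hρ : IsRunIndex C ρ) {ι ι' : Fin (runsWeak C).length → Fin n}
    (hι : StrictMono ι) (hι' : StrictMono ι') :
    Dominates (spread ι (runLen C)) (spread ι' (runLen C)) ↔ ∀ k, ι k ≤ ι' k := by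
  rw [spread_runLen_eq_content hρ.count, spread_runLen_eq_content hρ.count,
    dominates_content_iff (fun _ _ h => hι.monotone (hρ.monotone h))
      (fun _ _ h => hι'.monotone (hρ.monotone h))]
  exact ⟨fun h k => (hρ.surjective k).elim fun j hj => hj ▸ h j, fun h j => h _⟩

/-- Bumps are the largest insertions respecting the letter bounds. -/
theorem isBumpS_iff (hρ : IsRunIndex C ρ) {a b c : Fin n → ℕ}
    (hC : C ∈ shuffles (wordA a) (wordB b)) :
    IsBumpS a b C c ↔ ∃ ι : Fin (runsWeak C).length → Fin n, StrictMono ι ∧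
      c = spread ι (runLen C) ∧ (∀ j, (ι (ρ j) : ℕ) ≤ (2 * n - C.get j) / 2) ∧
      ∀ ι' : Fin (runsWeak C).length → Fin n, StrictMono ι' →
        (∀ j, (ι' (ρ j) : ℕ) ≤ (2 * n - C.get j) / 2) → ∀ k, ι' k ≤ ι k := by
  have hval := fun ι (hι : StrictMono ι) => dominates_runCount_iff (n := n) hC hρ.monotone hρ.count
    (ι := ι) hι
  constructor
  · rintro ⟨ι, hι, rfl, hA, hB, hmin⟩
    refine ⟨ι, hι, rfl, (hval ι hι).1 ⟨hA, hB⟩, fun ι' hι' h => ?_⟩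
    obtain ⟨hA', hB'⟩ := (hval ι' hι').2 h
    exact (hρ.dominates_runLen_iff hι' hι).1 (hmin ι' hι' hA' hB')
  · rintro ⟨ι, hι, rfl, hv, hmax⟩
    obtain ⟨hA, hB⟩ := (hval ι hι).2 hv
    exact ⟨ι, hι, rfl, hA, hB, fun ι' hι' hA' hB' =>
      (hρ.dominates_runLen_iff hι' hι).2 (hmax ι' hι' ((hval ι' hι').1 ⟨hA', hB'⟩))⟩

theorem isBumpS_unique (hρ : IsRunIndex C ρ) {a b c c' : Fin n → ℕ}
    (hC : C ∈ shuffles (wordA a) (wordB b)) (h : IsBumpS a b C c) (h' : IsBumpS a b C c') :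
    c = c' := by
  obtain ⟨ι, hι, rfl, hv, hmax⟩ := (hρ.isBumpS_iff hC).1 h
  obtain ⟨ι', hι', rfl, hv', hmax'⟩ := (hρ.isBumpS_iff hC).1 h'
  rw [funext fun k => le_antisymm (hmax' ι hι hv k) (hmax ι' hι' hv' k)]

theorem exists_isBumpS (hρ : IsRunIndex C ρ) {a b : Fin n → ℕ}
    (hC : C ∈ shuffles (wordA a) (wordB b)) (hne : (placements n (0, 0) C).Nonempty) :
    ∃ c, IsBumpS a b C c := by
  obtain ⟨p, hp⟩ := hne
  obtain ⟨ι₀, hι₀, hv₀, -⟩ := hρ.exists_insertion_of_mem_placements hp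
  set S := Finset.univ.filter fun ι : Fin (runsWeak C).length → Fin n =>
    StrictMono ι ∧ ∀ j, (ι (ρ j) : ℕ) ≤ (2 * n - C.get j) / 2 with hS
  have hSne : S.Nonempty := ⟨ι₀, Finset.mem_filter.2 ⟨Finset.mem_univ _, hι₀, hv₀⟩⟩
  have hsup : StrictMono (S.sup' hSne id) ∧
      ∀ j, (S.sup' hSne id (ρ j) : ℕ) ≤ (2 * n - C.get j) / 2 := by
    refine Finset.sup'_induction (p := fun ι => StrictMono ι ∧
      ∀ j, (ι (ρ j) : ℕ) ≤ (2 * n - C.get j) / 2) hSne id (fun f hf g hg => ?_) fun f hf => ?_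
    · refine ⟨fun k k' h => max_lt_max (hf.1 h) (hg.1 h), fun j => ?_⟩
      rw [Pi.sup_apply]
      rcases max_choice (f (ρ j)) (g (ρ j)) with h | h
      · exact h.symm ▸ hf.2 j
      · exact h.symm ▸ hg.2 j
    · exact (Finset.mem_filter.1 hf).2
  refine ⟨_, (hρ.isBumpS_iff hC).2 ⟨_, hsup.1, rfl, hsup.2, fun ι' hι' h => ?_⟩⟩
  have hmem : ι' ∈ S := Finset.mem_filter.2 ⟨Finset.mem_univ _, hι', h⟩
  exact Finset.le_sup' id hmem

theorem placementSum_eq_of_isBumpS (hρ : IsRunIndex C ρ) {a b c : Fin n → ℕ}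
    (hC : C ∈ shuffles (wordA a) (wordB b)) (h : IsBumpS a b C c) :
    placementSum n (0, 0) C = slideF c := by
  obtain ⟨ι, hι, rfl, hv, hmax⟩ := (hρ.isBumpS_iff hC).1 h
  refine placementSum_eq_slideF (w := fun j => ι (ρ j))
    (fun _ _ h => hι.monotone (hρ.monotone h)) (spread_runLen_eq_content hρ.count ι).symm
    fun p => ⟨fun hp => ?_, fun ⟨hmono, hle, hlt⟩ => ?_⟩
  · obtain ⟨ι', hι', hv', hp'⟩ := hρ.exists_insertion_of_mem_placements hp
    exact ⟨monotone_of_mem_placements hp, fun j => (hp' j).trans (hmax ι' hι' hv' _),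
      fun j j' h => hρ.placement_lt hp (hι.lt_iff_lt.1 h)⟩
  · simp only [placements, Finset.mem_filter, Finset.mem_univ, true_and]
    refine ⟨fun j => zero_biletterLE _, fun j => le_trans (hle j) (hv j), fun j j' h => ?_⟩
    rcases (hρ.monotone h).lt_or_eq with h' | h'
    · exact Or.inl (hlt j j' (hι h'))
    · rcases (hmono h).lt_or_eq with h'' | h''
      · exact Or.inl h''
      · exact Or.inr ⟨congrArg Fin.val h'', hρ.get_le j j' h h'⟩

end IsRunIndex

theorem le_of_strictMono {l n : ℕ} {ι : Fin l → Fin n} (hι : StrictMono ι) (k : Fin l) :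
    (k : ℕ) ≤ ι k := by
  obtain ⟨k, hk⟩ := k
  induction k with
  | zero => exact Nat.zero_le _
  | succ k ih =>
    have h1 := ih (by omega)
    have h2 : ι ⟨k, by omega⟩ < ι ⟨k + 1, hk⟩ := hι (by simp [Fin.lt_def])
    have h3 := Fin.lt_def.1 h2
    simp only at h1 ⊢
    omega

theorem psum_spread_le {l n : ℕ} {ι : Fin l → Fin n} (hι : StrictMono ι) (f : Fin l → ℕ)
    (i : ℕ) : psum (spread ι f) i ≤ psum f i := by
  unfold psum spread
  rw [Finset.sum_comm, Finset.sum_filter]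
  refine Finset.sum_le_sum fun k _ => ?_
  rw [Finset.sum_ite_eq]
  simp only [Finset.mem_filter, Finset.mem_univ, true_and]
  have := le_of_strictMono hι k
  split_ifs <;> omega

theorem dominatesList_of_dominates_spread {α : Type*} {n : ℕ} {a : Fin n → ℕ} {R : List α}
    (g : α → ℕ) {ι : Fin R.length → Fin n} (hι : StrictMono ι)
    (h : Dominates (spread ι fun k => g (R.get k)) a) : DominatesList (R.map g) a := by
  intro i
  refine (h i).trans ((psum_spread_le hι _ i).trans_eq ?_)
  rw [psum_eq_sum_take]
  congr 2
  exact List.ext_get (by simp) (by simp)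

theorem finsum_card_filter_smul {α β M : Type*} [AddCommMonoid M] (P : α → β → Prop)
    [∀ c, DecidablePred fun x => P x c] (F : β → M) (G : α → M) (S : Multiset α)
    (hex : ∀ x ∈ S, (∃ c, P x c ∧ (∀ c', P x c' → c' = c) ∧ F c = G x) ∨
      ((∀ c, ¬ P x c) ∧ G x = 0)) :
    (Function.support fun c => (S.filter fun x => P x c).card • F c).Finite ∧
      ∑ᶠ c, (S.filter fun x => P x c).card • F c = (S.map G).sum := by
  induction S using Multiset.induction_on with
  | empty => simp
  | cons x S ih =>
    obtain ⟨hfin, hsum⟩ := ih fun y hy => hex y (Multiset.mem_cons_of_mem hy)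
    have hx : (Function.support fun c => if P x c then F c else 0).Finite ∧
        ∑ᶠ c, (if P x c then F c else 0) = G x := by
      rcases hex x (Multiset.mem_cons_self x S) with ⟨c, hc, huniq, hF⟩ | ⟨hnone, h0⟩
      · have hcond : ∀ c', P x c' ↔ c' = c := fun c' => ⟨huniq c', fun h => h ▸ hc⟩
        simp only [hcond]
        refine ⟨(Set.finite_singleton c).subset fun c' h => ?_, ?_⟩
        · by_contra h'
          exact h (if_neg h')
        · rw [← hF, finsum_eq_single _ c fun c' h => if_neg h, if_pos rfl]
      · simp [hnone, h0]
    have hsplit : (fun c => ((x ::ₘ S).filter fun x => P x c).card • F c) =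
        fun c => (if P x c then F c else 0) + (S.filter fun x => P x c).card • F c := by
      funext c
      by_cases h : P x c
      · rw [Multiset.filter_cons_of_pos (p := fun x => P x c) _ h, if_pos h, Multiset.card_cons,
          succ_nsmul']
      · rw [Multiset.filter_cons_of_neg (p := fun x => P x c) _ h, if_neg h, zero_add]
    rw [hsplit]
    refine ⟨(hx.1.union hfin).subset (Function.support_add _ _), ?_⟩
    rw [finsum_add_distrib hx.1 hfin, hx.2, hsum, Multiset.map_cons, Multiset.sum_cons]

/-- the structure constants of the fundamental slide polynomials are given
by the slide product: `𝔉_a · 𝔉_b = Σ_c [c ∣ a ⧢ b] 𝔉_c`. -/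
theorem fundamentalSlide_mul (n : ℕ) (a b : Fin n → ℕ) :
    slideF a * slideF b = ∑ᶠ c : Fin n → ℕ, (slideMult a b c : ℤ) • slideF c := by
  rw [← placementSum_wordA, ← placementSum_wordB, placementSum_mul n _ _ fun x hx y hy h => by
    have := mem_wordA hx
    have := mem_wordB hy
    omega]
  simp only [Nat.cast_smul_eq_nsmul, slideMult]
  refine (finsum_card_filter_smul (S := shuffles (wordA a) (wordB b)) _ slideF
    (placementSum n (0, 0)) fun C hC => ?_).2.symm
  obtain ⟨ρ, hρ⟩ := exists_isRunIndex C
  by_cases h : ∃ c, IsBumpS a b C c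
  · obtain ⟨c, hc⟩ := h
    have ⟨ι, hι, _, hA, hB, _⟩ := hc
    exact Or.inl ⟨c, ⟨dominatesList_of_dominates_spread _ hι hA,
      dominatesList_of_dominates_spread _ hι hB, hc⟩,
      fun c' hc' => hρ.isBumpS_unique hC hc'.2.2 hc,
      (hρ.placementSum_eq_of_isBumpS hC hc).symm⟩
  · refine Or.inr ⟨fun c hc => h ⟨c, hc.2.2⟩, ?_⟩
    have : placements n (0, 0) C = ∅ :=
      Finset.not_nonempty_iff_eq_empty.1 fun hne => h (hρ.exists_isBumpS hC hne)
    rw [placementSum, this, Finset.sum_empty]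

end SlidePaper
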